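/- arXiv:2509.16344 — 2 statements merged into one kernel-verified Lean document; each statement's English description precedes it below -/
import Mathlib

section
/- Let X be a reflexive Banach space. Then X has property (B_f): for every countable sequence of closed distinct subspaces {0} = Y₀ ⊂ Y₁ ⊂ ⋯ ⊂ Yₙ ⊂ ⋯ ⊂ X (with Yₙ ≠ Yₙ₊₁ for all n), every N ≥ 1, and every non-increasing sequence of non-negative numbers e₀ ≥ e₁ ≥ ⋯ ≥ e_N, there exists x ∈ X such that ρ(x, Yₙ) = eₙ for n = 0, 1, …, N and ρ(x, Yₙ) = 0 for all n ≥ N + 1. -/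
open Metric Filter

theorem aux_mem {X : Type*} [NormedAddCommGroup X] [NormedSpace ℝ X]
    (Y : Submodule ℝ X) (hY : IsClosed (Y : Set X)) (x : X)
    (h : ∀ f : StrongDual ℝ X, (∀ y ∈ Y, f y = 0) → f x = 0) : x ∈ Y := by
  by_contra hx
  obtain ⟨f, u, hf, hu⟩ := geometric_hahn_banach_closed_point (Y.convex) hY hx
  have h0 : 0 < u := by simpa using hf 0 Y.zero_mem
  have hz : ∀ y ∈ Y, f y = 0 := by
    intro y hy
    by_contra hne
    have := hf ((u / f y) • y) (Y.smul_mem _ hy)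
    rw [map_smul, smul_eq_mul, div_mul_cancel₀ _ hne] at this
    exact lt_irrefl _ this
  have := h f hz
  linarith

theorem aux_ext {E : Type*} [NormedAddCommGroup E] [NormedSpace ℝ E]
    (A : Submodule ℝ E) (v : StrongDual ℝ E) (d : ℝ) (hd : 0 ≤ d)
    (hb : ∀ f ∈ A, ‖v f‖ ≤ d * ‖f‖) :
    ∃ G : StrongDual ℝ E, (∀ f ∈ A, G f = v f) ∧ ‖G‖ ≤ d := by
  obtain ⟨G, hG, hGn⟩ := exists_extension_norm_eq A (v.comp A.subtypeL)
  refine ⟨G, fun f hf => hG ⟨f, hf⟩, ?_⟩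
  rw [hGn]
  exact ContinuousLinearMap.opNorm_le_bound _ hd fun f => hb f f.2

theorem aux_prox {X : Type*} [NormedAddCommGroup X] [NormedSpace ℝ X]
    (hrefl : Function.Surjective (NormedSpace.inclusionInDoubleDual ℝ X))
    (Y : Submodule ℝ X) (hY : IsClosed (Y : Set X)) (x : X) :
    ∃ y ∈ Y, ‖x - y‖ ≤ infDist x (Y : Set X) := by
  have hne : (Y : Set X).Nonempty := ⟨0, Y.zero_mem⟩
  obtain ⟨A, hA⟩ : ∃ A : Submodule ℝ (StrongDual ℝ X), ∀ f, f ∈ A ↔ ∀ y ∈ Y, f y = 0 :=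
    ⟨{
      carrier := {f | ∀ y ∈ Y, f y = 0}
      add_mem' := by
        intro f g hf hg y hy
        simp [hf y hy, hg y hy]
      zero_mem' := by
        intro y hy
        simp
      smul_mem' := by
        intro c f hf y hy
        simp [hf y hy] }, fun f => Iff.rfl⟩
  have hb : ∀ f ∈ A, ‖NormedSpace.inclusionInDoubleDual ℝ X x f‖
      ≤ infDist x (Y : Set X) * ‖f‖ := by
    intro f hf
    rw [NormedSpace.dual_def]
    by_contra! hlt
    have hf0 : 0 < ‖f‖ := by
      refine lt_of_le_of_ne (norm_nonneg _) fun h0 => ?_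
      have : f = 0 := norm_eq_zero.1 h0.symm
      simp [this] at hlt
    rw [← lt_div_iff₀ hf0, infDist_lt_iff hne] at hlt
    obtain ⟨y, hy, hlt⟩ := hlt
    rw [lt_div_iff₀ hf0, dist_eq_norm] at hlt
    have h1 := f.le_opNorm (x - y)
    rw [map_sub, (hA _).1 hf y hy, sub_zero] at h1
    linarith
  obtain ⟨G, hG, hGn⟩ := aux_ext A _ _ infDist_nonneg hb
  obtain ⟨z, rfl⟩ := hrefl G
  refine ⟨x - z, ?_, ?_⟩
  · apply aux_mem Y hY
    intro f hf
    have : f z = f x := hG f ((hA f).2 hf)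
    simp [this]
  · rw [sub_sub_cancel]
    have h : ‖NormedSpace.inclusionInDoubleDual ℝ X z‖ = ‖z‖ :=
      (NormedSpace.inclusionInDoubleDualLi (E := X) ℝ).norm_map z
    rw [← h]
    exact hGn

theorem aux_trans {X : Type*} [NormedAddCommGroup X] [NormedSpace ℝ X]
    (Y : Submodule ℝ X) (x y : X) (hy : y ∈ Y) :
    infDist (x + y) (Y : Set X) = infDist x (Y : Set X) := by
  have key : ∀ (x y : X), y ∈ Y → infDist (x + y) (Y : Set X) ≤ infDist x (Y : Set X) := by
    intro x y hy
    rw [le_infDist ⟨0, Y.zero_mem⟩]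
    intro w hw
    have := infDist_le_dist_of_mem (x := x + y) (Y.add_mem hw hy)
    rwa [dist_add_right] at this
  apply le_antisymm (key x y hy)
  have := key (x + y) (-y) (Y.neg_mem hy)
  rwa [add_neg_cancel_right] at this

theorem aux_step {X : Type*} [NormedAddCommGroup X] [NormedSpace ℝ X]
    (Y : Submodule ℝ X) (hY : IsClosed (Y : Set X)) (w z : X) (hz : z ∉ Y) (c : ℝ)
    (hc : ‖w‖ ≤ c) : ∃ t : ℝ, infDist (w + t • z) (Y : Set X) = c := by
  have hne : (Y : Set X).Nonempty := ⟨0, Y.zero_mem⟩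
  have hd : 0 < infDist z (Y : Set X) := (hY.notMem_iff_infDist_pos hne).1 hz
  have hc0 : 0 ≤ c := (norm_nonneg _).trans hc
  set δ := infDist z (Y : Set X)
  let T := (c + ‖w‖ + 1) / δ
  have hT : 0 < T := by positivity
  have hcont : Continuous fun t : ℝ => infDist (w + t • z) (Y : Set X) :=
    (continuous_infDist_pt _).comp (by fun_prop)
  have h0 : infDist (w + (0:ℝ) • z) (Y : Set X) ≤ c := by
    have := infDist_le_dist_of_mem (x := w + (0:ℝ) • z) Y.zero_mem
    simp at this
    simpa using this.trans hc
  have h1 : c ≤ infDist (w + T • z) (Y : Set X) := by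
    rw [le_infDist hne]
    intro y hy
    have h2 : δ ≤ dist z (T⁻¹ • y) := infDist_le_dist_of_mem (Y.smul_mem _ hy)
    have h3 : ‖T • (z - T⁻¹ • y)‖ = T * dist z (T⁻¹ • y) := by
      rw [norm_smul, Real.norm_of_nonneg hT.le, dist_eq_norm]
    rw [smul_sub, smul_inv_smul₀ hT.ne'] at h3
    have h4 : T * δ = c + ‖w‖ + 1 := div_mul_cancel₀ _ hd.ne'
    have h5 : T * δ ≤ T * dist z (T⁻¹ • y) := by gcongr
    have h6 : ‖T • z - y‖ ≤ ‖w + T • z - y‖ + ‖w‖ := by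
      have := norm_sub_le (w + T • z - y) w
      rwa [show w + T • z - y - w = T • z - y by abel] at this
    rw [dist_eq_norm]
    linarith
  obtain ⟨t, -, ht⟩ := intermediate_value_Icc hT.le hcont.continuousOn ⟨h0, h1⟩
  exact ⟨t, ht⟩

/-- A reflexive Banach space has property (B_f). -/
theorem stmt_10 (X : Type*) [NormedAddCommGroup X] [NormedSpace ℝ X] [CompleteSpace X]
    (hrefl : Function.Surjective (NormedSpace.inclusionInDoubleDual ℝ X))
    (Y : ℕ → Submodule ℝ X) (hclosed : ∀ n, IsClosed (Y n : Set X)) (hY0 : Y 0 = ⊥)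
    (hnested : ∀ n, Y n < Y (n + 1))
    (N : ℕ) (hN : 1 ≤ N) (e : ℕ → ℝ) (hnonneg : ∀ n ≤ N, 0 ≤ e n)
    (hmono : ∀ n < N, e (n + 1) ≤ e n) :
    ∃ x : X, (∀ n ≤ N, infDist x (Y n : Set X) = e n) ∧
      ∀ n > N, infDist x (Y n : Set X) = 0 := by
  have hm : Monotone Y := monotone_nat_of_le_succ fun n => (hnested n).le
  have key : ∀ k ≤ N + 1, ∃ x : X, ∀ n, N + 1 - k ≤ n →
      infDist x (Y n : Set X) = if n ≤ N then e n else 0 := by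
    intro k
    induction k with
    | zero =>
      intro _
      refine ⟨0, fun n hn => ?_⟩
      rw [if_neg (by omega)]
      exact infDist_zero_of_mem (Y n).zero_mem
    | succ k ih =>
      intro hk
      obtain ⟨x, hx⟩ := ih (by omega)
      obtain ⟨m, hmk⟩ : ∃ m, m = N - k := ⟨_, rfl⟩
      have e1 : N + 1 - k = m + 1 := by omega
      have e2 : N + 1 - (k + 1) = m := by omega
      rw [e1] at hx
      rw [e2]
      obtain ⟨y, hy, hxy⟩ := aux_prox hrefl (Y (m + 1)) (hclosed _) x
      obtain ⟨z, hz, hz'⟩ := SetLike.exists_of_lt (hnested m)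
      have hle : ‖x - y‖ ≤ e m := by
        refine hxy.trans ?_
        rw [hx _ le_rfl]
        split_ifs with h
        · exact hmono m (by omega)
        · exact hnonneg m (by omega)
      obtain ⟨t, ht⟩ := aux_step (Y m) (hclosed m) (x - y) z hz' (e m) hle
      refine ⟨x - y + t • z, fun n hn => ?_⟩
      rcases hn.eq_or_lt with rfl | hn
      · rw [ht, if_pos (by omega)]
      · have hs : Y (m + 1) ≤ Y n := hm hn
        rw [← hx n hn, aux_trans _ _ _ ((Y n).smul_mem t (hs hz)), sub_eq_add_neg,
          aux_trans _ _ _ ((Y n).neg_mem (hs hy))]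
  obtain ⟨x, hx⟩ := key (N + 1) le_rfl
  refine ⟨x, fun n hn => ?_, fun n hn => ?_⟩
  · rw [hx n (by omega), if_pos hn]
  · rw [hx n (by omega), if_neg (by omega)]
end

section
/- Let X be a reflexive Banach space, let Y′ ⊂ Y be closed subspaces of X with Y′ ≠ Y, let u ∈ X, and set e := ρ(u, Y). Then for every real number e′ with e′ ≥ e there exists v ∈ Y such that ρ(u + v, Y′) = e′ and ρ(u + v, Y) = e. -/
open Metric Filter

lemma ext_aux {E : Type*} [NormedAddCommGroup E] [NormedSpace ℝ E] (P : Submodule ℝ E)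
    (G : StrongDual ℝ E) (C : ℝ) (hC : 0 ≤ C) (h : ∀ f ∈ P, ‖G f‖ ≤ C * ‖f‖) :
    ∃ F : StrongDual ℝ E, (∀ f ∈ P, F f = G f) ∧ ‖F‖ ≤ C := by
  obtain ⟨F, hF, hFn⟩ := exists_extension_norm_eq P (G.comp P.subtypeL)
  refine ⟨F, fun f hf => hF ⟨f, hf⟩, ?_⟩
  rw [hFn]
  exact ContinuousLinearMap.opNorm_le_bound _ hC fun f => h f.1 f.2

lemma best_aux (X : Type*) [NormedAddCommGroup X] [NormedSpace ℝ X]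
    (hrefl : Function.Surjective (NormedSpace.inclusionInDoubleDual ℝ X))
    (Y : Submodule ℝ X) (hclosed : IsClosed (Y : Set X)) (u : X) :
    ∃ z : X, u - z ∈ Y ∧ ‖z‖ ≤ infDist u (Y : Set X) := by
  obtain ⟨P, hP'⟩ : ∃ P : Submodule ℝ (StrongDual ℝ X), ∀ f, f ∈ P ↔ ∀ y ∈ Y, f y = 0 := ⟨
    { carrier := {f | ∀ y ∈ Y, f y = 0}
      add_mem' := by
        intro a b ha hb y hy
        simp [ha y hy, hb y hy]
      zero_mem' := by
        intro y hy
        simp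
      smul_mem' := by
        intro c f hf y hy
        simp [hf y hy] }, fun f => Iff.rfl⟩
  have hP : ∀ f : StrongDual ℝ X, f ∈ P → ∀ y ∈ Y, f y = 0 := fun f hf => (hP' f).1 hf
  have hYne : (Y : Set X).Nonempty := ⟨0, Y.zero_mem⟩
  have hg : ∀ f ∈ P, ‖NormedSpace.inclusionInDoubleDual ℝ X u f‖
      ≤ infDist u (Y : Set X) * ‖f‖ := by
    intro f hf
    rcases (norm_nonneg f).eq_or_lt with h | h
    · have := f.le_opNorm u
      rw [← h] at this ⊢
      simpa using this
    · rw [← div_le_iff₀ h]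
      refine (le_infDist hYne).2 ?_
      intro y hy
      have h0 := hP f hf y hy
      have h1 : NormedSpace.inclusionInDoubleDual ℝ X u f = f (u - y) := by
        rw [map_sub, h0, sub_zero]; rfl
      rw [h1, dist_eq_norm, div_le_iff₀ h, mul_comm]
      exact f.le_opNorm _
  obtain ⟨F, hF, hFn⟩ := ext_aux P _ _ infDist_nonneg hg
  obtain ⟨z, hz⟩ := hrefl F
  refine ⟨z, ?_, ?_⟩
  · by_contra hn
    obtain ⟨f, s, hs, hs'⟩ := geometric_hahn_banach_closed_point Y.convex hclosed hn
    have h0 : 0 < s := by simpa using hs 0 Y.zero_mem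
    have hfP : f ∈ P := by
      rw [hP']
      intro y hy
      by_contra hne
      have := hs ((s / f y) • y) (Y.smul_mem _ hy)
      rw [map_smul, smul_eq_mul, div_mul_cancel₀ _ hne] at this
      exact lt_irrefl _ this
    have h1 := hF f hfP
    rw [← hz] at h1
    have h2 : f z = f u := h1
    rw [map_sub, h2, sub_self] at hs'
    linarith
  · have : ‖NormedSpace.inclusionInDoubleDual ℝ X z‖ = ‖z‖ :=
      (NormedSpace.inclusionInDoubleDualLi ℝ (E := X)).norm_map z
    rw [← this, hz]
    exact hFn

lemma infDist_add_mem_aux {X : Type*} [NormedAddCommGroup X] [NormedSpace ℝ X]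
    (Y : Submodule ℝ X) (u v : X) (hv : v ∈ Y) :
    infDist (u + v) (Y : Set X) ≤ infDist u (Y : Set X) := by
  refine (le_infDist ⟨0, Y.zero_mem⟩).2 ?_
  intro y hy
  refine (infDist_le_dist_of_mem (Y.add_mem hy hv : y + v ∈ (Y : Set X))).trans ?_
  simp

/-- In a reflexive Banach space, if `Y' ⊊ Y` are closed subspaces, `u ∈ X` and
`e = ρ(u, Y)`, then for every `e' ≥ e` there is `v ∈ Y` with `ρ(u + v, Y') = e'`
and `ρ(u + v, Y) = e`. -/
theorem stmt_15 (X : Type*) [NormedAddCommGroup X] [NormedSpace ℝ X] [CompleteSpace X]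
    (hrefl : Function.Surjective (NormedSpace.inclusionInDoubleDual ℝ X))
    (Y' Y : Submodule ℝ X) (hclosed' : IsClosed (Y' : Set X)) (hclosed : IsClosed (Y : Set X))
    (hle : Y' ≤ Y) (hne : Y' ≠ Y) (u : X) (e : ℝ) (he : e = infDist u (Y : Set X)) :
    ∀ e' : ℝ, e ≤ e' → ∃ v ∈ Y, infDist (u + v) (Y' : Set X) = e' ∧
      infDist (u + v) (Y : Set X) = e := by
  intro e' hee'
  obtain ⟨z, hz, hzn⟩ := best_aux X hrefl Y hclosed u
  obtain ⟨w, hw, hw'⟩ := SetLike.exists_of_lt (lt_of_le_of_ne hle hne)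
  have hne' : (Y' : Set X).Nonempty := ⟨0, Y'.zero_mem⟩
  set d := infDist w (Y' : Set X) with hd
  have hdpos : 0 < d := (hclosed'.notMem_iff_infDist_pos hne').1 hw'
  -- behaviour along the ray
  let φ : ℝ → ℝ := fun t => infDist (z + t • w) (Y' : Set X)
  have hφ : Continuous φ := (continuous_infDist_pt _).comp (by fun_prop)
  have hφ0 : φ 0 ≤ e' := by
    have : φ 0 ≤ dist (z + (0:ℝ) • w) 0 := infDist_le_dist_of_mem Y'.zero_mem
    simp at this
    linarith
  have hφt : ∀ t : ℝ, 0 < t → t * d - ‖z‖ ≤ φ t := by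
    intro t ht
    refine (le_infDist hne').2 ?_
    intro y hy
    have h1 : d ≤ dist w (t⁻¹ • y) := infDist_le_dist_of_mem (Y'.smul_mem _ hy)
    have h2 : t * dist w (t⁻¹ • y) = ‖t • w - y‖ := by
      rw [dist_eq_norm, ← abs_of_pos ht, ← Real.norm_eq_abs, ← norm_smul, smul_sub,
        Real.norm_eq_abs, abs_of_pos ht, smul_inv_smul₀ ht.ne']
    have h3 : ‖t • w - y‖ ≤ ‖z + t • w - y‖ + ‖z‖ := by
      have := norm_sub_le (z + t • w - y) z
      rwa [show z + t • w - y - z = t • w - y by abel] at this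
    have h4 := mul_le_mul_of_nonneg_left h1 ht.le
    rw [dist_eq_norm]
    linarith
  have he0 : 0 ≤ e := he ▸ infDist_nonneg
  let T : ℝ := (e' + ‖z‖ + 1) / d
  have hT : 0 < T := by
    have := norm_nonneg z
    exact div_pos (by linarith) hdpos
  have hφT : e' ≤ φ T := by
    have := hφt T hT
    rw [show T * d = e' + ‖z‖ + 1 from div_mul_cancel₀ _ hdpos.ne'] at this
    linarith
  obtain ⟨t, -, ht⟩ := intermediate_value_Icc hT.le hφ.continuousOn ⟨hφ0, hφT⟩
  have hv : t • w - (u - z) ∈ Y := Y.sub_mem (Y.smul_mem _ hw) hz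
  refine ⟨t • w - (u - z), hv, ?_, ?_⟩
  · rw [← ht]
    show _ = infDist _ _
    congr 1
    abel
  · rw [he]
    refine le_antisymm (infDist_add_mem_aux Y _ _ hv) ?_
    have := infDist_add_mem_aux Y (u + (t • w - (u - z))) _ (Y.neg_mem hv)
    rwa [add_neg_cancel_right] at this
end
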